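/- arXiv:1010.3978 — 2 statements merged into one kernel-verified Lean document; each statement's English description precedes it below -/
import Mathlib

section
/- Let (T_n)_{n∈ℕ} be a sequence of self-adjoint operators on a complex Hilbert space H with a common core D, such that 0 ≤ ⟨ψ, T_nψ⟩ ≤ ⟨ψ, T_{n+1}ψ⟩ for all n and all ψ ∈ D, and such that for every ψ ∈ D the sequence T_nψ converges in H; define Tψ := lim_n T_nψ for ψ ∈ D. Then there exists a self-adjoint operator T' on H extending T (i.e. D ⊆ dom T' and T'ψ = Tψ for ψ ∈ D) such that T_n → T' in the strong resolvent sense: for every λ ∈ ℂ ∖ ℝ and every x ∈ H, (T_n + λI)^{-1}x → (T' + λI)^{-1}x. -/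
open scoped InnerProductSpace ComplexOrder
open Filter

/-!
For nonnegative self-adjoint `A`, the number `⟪x, (A + 1)⁻¹ x⟫` is the supremum over `u` in the
domain of `2 re ⟪x, u⟫ - re ⟪u, (A + 1) u⟫`. A core suffices for this supremum, so monotonicity on
the common core makes the resolvents `(Tₙ + 1)⁻¹` a decreasing sequence of positive operators,
which converges strongly to some symmetric operator `S`.

If `qₙ = (uₙ, Tₙ uₙ)` converges to `p = (u, w)`, then `(Tₙ + 1)⁻¹ (w + u) → u`, because the
resolvents are uniformly bounded; hence `S (w + u) = u`. In particular the range of `S` contains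
`D`, so `S` is injective with dense range and `T' = S⁻¹ - 1` is self-adjoint. Its graph consists
exactly of the limits of points of the graphs of the `Tₙ`, and the same uniform boundedness argument
at another `l` gives strong convergence of `(Tₙ + l)⁻¹` to `(T' + l)⁻¹`.
-/

section

open scoped Topology ComplexConjugate
open RCLike (re im)

section Core

variable {R E F : Type*} [CommRing R] [TopologicalSpace R] [AddCommGroup E] [AddCommGroup F]
  [Module R E] [Module R F] [TopologicalSpace E] [TopologicalSpace F] [ContinuousAdd E]
  [ContinuousAdd F] [ContinuousSMul R E] [ContinuousSMul R F]

theorem graph_closure_le_topologicalClosure_graph (f : E →ₗ.[R] F) :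
    f.closure.graph ≤ f.graph.topologicalClosure := by
  by_cases hf : f.IsClosable
  · exact hf.graph_closure_eq_closure_graph.ge
  · rw [LinearPMap.closure_def' hf]
    exact Submodule.le_topologicalClosure _

theorem graph_subset_of_hasCore {A : E →ₗ.[R] F} {D : Submodule R E} (hcore : A.HasCore D)
    {s : Set (E × F)} (hs : IsClosed s)
    (hD : ∀ ψ (hψ : ψ ∈ D), (ψ, A ⟨ψ, hcore.le_domain hψ⟩) ∈ s) : (A.graph : Set (E × F)) ⊆ s := by
  have hrestrict : ((A.domRestrict D).graph : Set (E × F)) ⊆ s := by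
    intro p hp
    obtain ⟨u, hu, hAu⟩ := (LinearPMap.mem_graph_iff _).mp hp
    have hmem := hD u u.2.1
    rwa [← LinearPMap.domRestrict_apply (x := u) rfl, hu, hAu] at hmem
  calc (A.graph : Set (E × F)) = (A.domRestrict D).closure.graph := by rw [hcore.closure_eq]
    _ ⊆ (A.domRestrict D).graph.topologicalClosure :=
      graph_closure_le_topologicalClosure_graph _
    _ ⊆ s := closure_minimal hrestrict hs

theorem dense_of_hasCore {A : E →ₗ.[R] F} {D : Submodule R E} (hA : Dense (A.domain : Set E))
    (hcore : A.HasCore D) : Dense (D : Set E) := by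
  have hsub := graph_subset_of_hasCore hcore (isClosed_closure.preimage continuous_fst)
    fun ψ hψ => subset_closure hψ
  exact dense_closure.mp (hA.mono fun u hu => hsub (A.mem_graph ⟨u, hu⟩))

end Core

variable {𝕜 H : Type*} [RCLike 𝕜] [NormedAddCommGroup H] [InnerProductSpace 𝕜 H]

section Positive

theorem norm_apply_sq_le_of_isPositive_of_le {A B : H →L[𝕜] H} (hA : A.IsPositive) (hAB : A ≤ B)
    (x : H) : ‖A x‖ ^ 2 ≤ ‖B‖ * re ⟪A x, x⟫_𝕜 := by
  -- Cauchy–Schwarz for the form of `A`, via the discriminant along the line `x - t • A x`.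
  have hBAx : re ⟪A (A x), A x⟫_𝕜 ≤ ‖B‖ * ‖A x‖ ^ 2 := by
    have hle := hAB.re_inner_nonneg_left (A x)
    rw [sub_apply, inner_sub_left, map_sub, sub_nonneg] at hle
    calc re ⟪A (A x), A x⟫_𝕜 ≤ re ⟪B (A x), A x⟫_𝕜 := hle
      _ ≤ ‖B (A x)‖ * ‖A x‖ := re_inner_le_norm _ _
      _ ≤ ‖B‖ * ‖A x‖ * ‖A x‖ := by gcongr; exact B.le_opNorm _
      _ = ‖B‖ * ‖A x‖ ^ 2 := by ring
  have hquad (t : ℝ) :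
      0 ≤ ‖B‖ * ‖A x‖ ^ 2 * (t * t) + -(2 * ‖A x‖ ^ 2) * t + re ⟪A x, x⟫_𝕜 := by
    have hpos := hA.re_inner_nonneg_left (x - (t : 𝕜) • A x)
    have hsymm : ⟪A (A x), x⟫_𝕜 = ⟪A x, A x⟫_𝕜 := hA.inner_left_eq_inner_right _ _
    simp only [map_sub, map_smul, inner_sub_left, inner_sub_right, inner_smul_left,
      inner_smul_right, hsymm, RCLike.conj_ofReal, RCLike.re_ofReal_mul,
      inner_self_eq_norm_sq] at hpos
    nlinarith [mul_le_mul_of_nonneg_left hBAx (mul_self_nonneg t)]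
  have hdiscrim := discrim_le_zero hquad
  rcases (sq_nonneg ‖A x‖).eq_or_lt with hAx | hAx
  · rw [← hAx]
    exact mul_nonneg (norm_nonneg B) (hA.re_inner_nonneg_left x)
  · refine le_of_mul_le_mul_left ?_ hAx
    rw [discrim] at hdiscrim
    linarith

theorem two_mul_re_inner_apply_le_of_isPositive {R : H →L[𝕜] H} (hR : R.IsPositive) (x w : H) :
    2 * re ⟪x, R w⟫_𝕜 ≤ re ⟪R x, x⟫_𝕜 + re ⟪R w, w⟫_𝕜 := by
  have hnonneg := hR.re_inner_nonneg_left (x - w)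
  have hsymm : ⟪R x, w⟫_𝕜 = ⟪x, R w⟫_𝕜 := hR.inner_left_eq_inner_right x w
  have hconj : re ⟪R w, x⟫_𝕜 = re ⟪x, R w⟫_𝕜 := inner_re_symm (R w) x
  simp only [map_sub, inner_sub_left, inner_sub_right, hsymm, hconj] at hnonneg
  linarith

theorem exists_tendsto_apply_of_antitone {ι : Type*} [SemilatticeSup ι] [Nonempty ι]
    [CompleteSpace H] {R : ι → H →L[𝕜] H} (hanti : Antitone R) (hpos : ∀ i, (R i).IsPositive)
    (x : H) : ∃ y, Tendsto (fun i => R i x) atTop (𝓝 y) := by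
  let i₀ := Classical.arbitrary ι
  have hdist {i j : ι} (hi : i₀ ≤ i) (hij : i ≤ j) :
      ‖R i x - R j x‖ ^ 2 ≤ ‖R i₀‖ * (re ⟪R i x, x⟫_𝕜 - re ⟪R j x, x⟫_𝕜) := by
    have hsub_le : R i - R j ≤ R i := by
      rw [ContinuousLinearMap.le_def, sub_sub_cancel]
      exact hpos j
    simpa only [sub_apply, inner_sub_left, map_sub] using
      norm_apply_sq_le_of_isPositive_of_le (hanti hij) (hsub_le.trans (hanti hi)) x
  have hform : CauchySeq fun i => ‖R i₀‖ * re ⟪R i x, x⟫_𝕜 := by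
    have hform_anti : Antitone fun i => re ⟪R i x, x⟫_𝕜 := fun i j hij => by
      simpa [inner_sub_left] using (hanti hij).re_inner_nonneg_left x
    have hbdd : BddBelow (Set.range fun i => re ⟪R i x, x⟫_𝕜) :=
      ⟨0, Set.forall_mem_range.mpr fun i => (hpos i).re_inner_nonneg_left x⟩
    exact ((tendsto_atTop_ciInf hform_anti hbdd).const_mul _).cauchySeq
  refine cauchySeq_tendsto_of_complete (Metric.cauchySeq_iff'.mpr fun ε hε => ?_)
  obtain ⟨N, hN⟩ := Metric.cauchySeq_iff.mp hform (ε ^ 2) (by positivity)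
  refine ⟨N ⊔ i₀, fun i hi => ?_⟩
  have hclose := hN (N ⊔ i₀) le_sup_left i (le_sup_left.trans hi)
  rw [Real.dist_eq, ← mul_sub] at hclose
  rw [dist_comm, dist_eq_norm]
  exact lt_of_pow_lt_pow_left₀ 2 hε.le
    (((hdist le_sup_right hi).trans (le_abs_self _)).trans_lt hclose)

theorem exists_isSymmetric_tendsto_apply [CompleteSpace H] {ι : Type*} {f : Filter ι} [f.NeBot]
    {R : ι → H →L[𝕜] H} (hsymm : ∀ i, (R i).IsSymmetric)
    (hlim : ∀ x, ∃ y, Tendsto (fun i => R i x) f (𝓝 y)) :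
    ∃ S : H →L[𝕜] H, S.IsSymmetric ∧ ∀ x, Tendsto (fun i => R i x) f (𝓝 (S x)) := by
  choose S hS using hlim
  let S' : H →ₗ[𝕜] H :=
    linearMapOfTendsto S (fun i => (R i : H →ₗ[𝕜] H)) (tendsto_pi_nhds.mpr hS)
  have hS'symm : S'.IsSymmetric := fun x y =>
    tendsto_nhds_unique ((hS x).inner tendsto_const_nhds)
      ((tendsto_const_nhds.inner (hS y)).congr fun i => (hsymm i x y).symm)
  exact ⟨⟨S', hS'symm.continuous⟩, hS'symm, hS⟩

end Positive

section Accretive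

variable {A : H →ₗ.[𝕜] H}

/-- Accretive operators: `0 ≤ re ⟪u, A u⟫` for `u` in the domain. A self-adjoint operator is
accretive iff it is nonnegative. -/
def IsAccretive (A : H →ₗ.[𝕜] H) : Prop :=
  ∀ p ∈ A.graph, 0 ≤ re ⟪p.1, p.2⟫_𝕜

theorem isAccretive_of_hasCore {D : Submodule 𝕜 H} (hcore : A.HasCore D)
    (hD : ∀ ψ (hψ : ψ ∈ D), 0 ≤ re ⟪ψ, A ⟨ψ, hcore.le_domain hψ⟩⟫_𝕜) : IsAccretive A := by
  have hclosed : IsClosed {p : H × H | 0 ≤ re ⟪p.1, p.2⟫_𝕜} :=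
    isClosed_le continuous_const (by fun_prop)
  exact graph_subset_of_hasCore hcore hclosed hD

theorem mul_norm_le_norm_of_mul_norm_sq_le_norm_inner {u w : H} {c : ℝ}
    (h : c * ‖u‖ ^ 2 ≤ ‖⟪u, w⟫_𝕜‖) : c * ‖u‖ ≤ ‖w‖ := by
  rcases (norm_nonneg u).eq_or_lt with hu | hu
  · simp [← hu]
  · refine le_of_mul_le_mul_left ?_ hu
    linarith [h.trans (norm_inner_le_norm u w)]

theorem inner_fst_add_smul_fst (l : 𝕜) (p : H × H) :
    ⟪p.1, p.2 + l • p.1⟫_𝕜 = ⟪p.1, p.2⟫_𝕜 + l * (‖p.1‖ ^ 2 : ℝ) := by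
  rw [inner_add_right, inner_smul_right, inner_self_eq_norm_sq_to_K, RCLike.ofReal_pow]

theorem re_mul_norm_sq_le_re_inner (hA : IsAccretive A) (l : 𝕜) {p : H × H} (hp : p ∈ A.graph) :
    re l * ‖p.1‖ ^ 2 ≤ re ⟪p.1, p.2 + l • p.1⟫_𝕜 := by
  rw [inner_fst_add_smul_fst, map_add, RCLike.re_mul_ofReal]
  exact le_add_of_nonneg_left (hA p hp)

end Accretive

section SelfAdjoint

variable [CompleteSpace H] {A : H →ₗ.[𝕜] H}

theorem isSelfAdjoint_iff_graph_adjoint_eq (hA : Dense (A.domain : Set H)) :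
    IsSelfAdjoint A ↔ A.graph.adjoint = A.graph := by
  rw [LinearPMap.isSelfAdjoint_def, ← LinearPMap.adjoint_graph_eq_graph_adjoint hA]
  exact ⟨congrArg _, LinearPMap.eq_of_eq_graph⟩

theorem inner_snd_fst_eq_of_isSelfAdjoint (hA : IsSelfAdjoint A) {p q : H × H}
    (hp : p ∈ A.graph) (hq : q ∈ A.graph) : ⟪p.2, q.1⟫_𝕜 = ⟪p.1, q.2⟫_𝕜 := by
  rw [← (isSelfAdjoint_iff_graph_adjoint_eq hA.dense_domain).mp hA,
    Submodule.mem_adjoint_iff] at hq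
  exact sub_eq_zero.mp (hq p.1 p.2 hp)

theorem im_mul_norm_sq_eq_im_inner (hA : IsSelfAdjoint A) (l : 𝕜) {p : H × H}
    (hp : p ∈ A.graph) : im l * ‖p.1‖ ^ 2 = im ⟪p.1, p.2 + l • p.1⟫_𝕜 := by
  have hreal : im ⟪p.1, p.2⟫_𝕜 = 0 := by
    rw [← RCLike.conj_eq_iff_im, inner_conj_symm, inner_snd_fst_eq_of_isSelfAdjoint hA hp hp]
  rw [inner_fst_add_smul_fst, map_add, RCLike.im_mul_ofReal, hreal, zero_add]

theorem max_re_abs_im_mul_norm_fst_le (hA : IsSelfAdjoint A) (hacc : IsAccretive A) (l : 𝕜)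
    {p : H × H} (hp : p ∈ A.graph) : max (re l) |im l| * ‖p.1‖ ≤ ‖p.2 + l • p.1‖ := by
  refine mul_norm_le_norm_of_mul_norm_sq_le_norm_inner (𝕜 := 𝕜) ?_
  rw [max_mul_of_nonneg _ _ (sq_nonneg _)]
  refine max_le ((re_mul_norm_sq_le_re_inner hacc l hp).trans (RCLike.re_le_norm _)) ?_
  calc |im l| * ‖p.1‖ ^ 2 = |im l * ‖p.1‖ ^ 2| := by rw [abs_mul, abs_of_nonneg (sq_nonneg ‖p.1‖)]
    _ ≤ ‖⟪p.1, p.2 + l • p.1⟫_𝕜‖ := by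
      rw [im_mul_norm_sq_eq_im_inner hA l hp]
      exact RCLike.abs_im_le_norm _

end SelfAdjoint

section Resolvent

variable {A B : H →ₗ.[𝕜] H} {l : 𝕜} {R S : H →L[𝕜] H}

/-- The bounded operator `R` is the everywhere-defined inverse `(A + l)⁻¹`; the sign of `l` is the
one opposite to the usual `(A - z)⁻¹`. -/
structure IsResolvent (A : H →ₗ.[𝕜] H) (l : 𝕜) (R : H →L[𝕜] H) : Prop where
  mem_graph : ∀ x, (R x, x - l • R x) ∈ A.graph
  apply_eq : ∀ p ∈ A.graph, R (p.2 + l • p.1) = p.1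

namespace IsResolvent

theorem mem_graph_iff (hR : IsResolvent A l R) {p : H × H} :
    p ∈ A.graph ↔ R (p.2 + l • p.1) = p.1 := by
  refine ⟨hR.apply_eq p, fun hp => ?_⟩
  have hmem := hR.mem_graph (p.2 + l • p.1)
  rwa [hp, add_sub_cancel_right] at hmem

theorem exists_apply_add_smul_eq (hR : IsResolvent A l R) (x : H) :
    ∃ h : R x ∈ A.domain, A ⟨R x, h⟩ + l • R x = x := by
  obtain ⟨u, hu : (u : H) = R x, hAu⟩ := (LinearPMap.mem_graph_iff A).mp (hR.mem_graph x)
  have hmem : R x ∈ A.domain := hu ▸ u.2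
  obtain rfl : u = ⟨R x, hmem⟩ := Subtype.ext hu
  exact ⟨hmem, eq_sub_iff_add_eq.mp hAu⟩

theorem norm_le_inv_max_re_abs_im [CompleteSpace H] (hR : IsResolvent A l R)
    (hA : IsSelfAdjoint A) (hacc : IsAccretive A) (hl : 0 < max (re l) |im l|) :
    ‖R‖ ≤ (max (re l) |im l|)⁻¹ := by
  refine R.opNorm_le_bound (inv_nonneg.mpr hl.le) fun x => ?_
  rw [inv_mul_eq_div, le_div_iff₀' hl]
  simpa using max_re_abs_im_mul_norm_fst_le hA hacc l (hR.mem_graph x)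

theorem mem_adjoint_graph_iff (hR : IsResolvent A l R) (hl : conj l = l)
    {p : H × H} : p ∈ A.graph.adjoint ↔ ∀ x, ⟪R x, p.2 + l • p.1⟫_𝕜 = ⟪x, p.1⟫_𝕜 := by
  have hinner (a b : H) :
      ⟪b, p.1⟫_𝕜 - ⟪a, p.2⟫_𝕜 = 0 ↔ ⟪a, p.2 + l • p.1⟫_𝕜 = ⟪b + l • a, p.1⟫_𝕜 := by
    rw [inner_add_right, inner_add_left, inner_smul_left, inner_smul_right, hl, add_left_inj,
      sub_eq_zero, eq_comm]
  simp only [Submodule.mem_adjoint_iff, hinner]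
  refine ⟨fun h x => ?_, fun h a b hab => ?_⟩
  · simpa using h _ _ (hR.mem_graph x)
  · rw [← h, hR.apply_eq _ hab]

theorem isSelfAdjoint_iff_isSymmetric [CompleteSpace H] (hR : IsResolvent A l R)
    (hA : Dense (A.domain : Set H)) (hl : conj l = l) : IsSelfAdjoint A ↔ R.IsSymmetric := by
  rw [isSelfAdjoint_iff_graph_adjoint_eq hA]
  refine ⟨fun hadj x y => ?_, fun hsymm => Submodule.ext fun p => ?_⟩
  · have hy := hR.mem_graph y
    rw [← hadj, hR.mem_adjoint_graph_iff hl] at hy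
    simpa using hy x
  · rw [hR.mem_adjoint_graph_iff hl, hR.mem_graph_iff, ext_iff_inner_left 𝕜]
    exact forall_congr' fun x => by rw [← hsymm.apply_clm x]

theorem isPositive [CompleteSpace H] (hR : IsResolvent A l R) (hA : IsSelfAdjoint A)
    (hacc : IsAccretive A) (hl : 0 ≤ l) : R.IsPositive := by
  obtain ⟨hre, him⟩ := RCLike.nonneg_iff.mp hl
  refine ⟨(hR.isSelfAdjoint_iff_isSymmetric hA.dense_domain
    (RCLike.conj_eq_iff_im.mpr him)).mp hA, fun x => ?_⟩
  have hform := re_mul_norm_sq_le_re_inner hacc l (hR.mem_graph x)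
  rw [sub_add_cancel] at hform
  exact (mul_nonneg hre (sq_nonneg _)).trans hform

/-- Resolvents reverse order: `R w = u` turns `two_mul_re_inner_apply_le_of_isPositive` into
`2 re ⟪x, u⟫ ≤ re ⟪R x, x⟫ + re ⟪u, (A + l) u⟫`, which survives replacing `A` by `B` on the core. -/
theorem le_of_re_inner_le_on_core (hR : IsResolvent A l R) (hS : IsResolvent B l S)
    (hRpos : R.IsPositive) (hSsymm : S.IsSymmetric) {D : Submodule 𝕜 H} (hDA : D ≤ A.domain)
    (hcore : B.HasCore D)
    (hAB : ∀ ψ (hψ : ψ ∈ D),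
      re ⟪ψ, A ⟨ψ, hDA hψ⟩⟫_𝕜 ≤ re ⟪ψ, B ⟨ψ, hcore.le_domain hψ⟩⟫_𝕜) : S ≤ R := by
  refine ⟨hRpos.isSymmetric.sub hSsymm, fun x => ?_⟩
  have hclosed : IsClosed
      {p : H × H | 2 * re ⟪x, p.1⟫_𝕜 ≤ re ⟪R x, x⟫_𝕜 + re ⟪p.1, p.2 + l • p.1⟫_𝕜} :=
    isClosed_le (by fun_prop) (by fun_prop)
  have hgraph := graph_subset_of_hasCore hcore hclosed fun ψ hψ => by
    have hRψ := hR.apply_eq _ (A.mem_graph ⟨ψ, hDA hψ⟩)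
    have hvar := two_mul_re_inner_apply_le_of_isPositive hRpos x (A ⟨ψ, hDA hψ⟩ + l • ψ)
    rw [hRψ, inner_add_right, map_add] at hvar
    rw [Set.mem_ofPred_eq, inner_add_right, map_add]
    linarith [hAB ψ hψ]
  have hSx := hgraph (hS.mem_graph x)
  rw [Set.mem_ofPred_eq, sub_add_cancel, inner_re_symm, two_mul] at hSx
  simpa [ContinuousLinearMap.reApplyInnerSelf, inner_sub_left] using le_of_add_le_add_right hSx

end IsResolvent

theorem injective_of_isSymmetric_of_denseRange (hS : S.IsSymmetric) (hdense : DenseRange S) :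
    Function.Injective S := by
  refine (injective_iff_map_eq_zero S).mpr fun x hx => ?_
  refine hdense.eq_zero_of_inner_left 𝕜 fun y => ?_
  calc ⟪x, S y⟫_𝕜 = ⟪S x, y⟫_𝕜 := (hS x y).symm
    _ = 0 := by rw [hx, inner_zero_left]

/-- The operator `A + l`, as a bounded operator on the graph of `A`. -/
def graphAddSMul (A : H →ₗ.[𝕜] H) (l : 𝕜) : A.graph →L[𝕜] H :=
  (ContinuousLinearMap.snd 𝕜 H H + l • ContinuousLinearMap.fst 𝕜 H H) ∘L A.graph.subtypeL

theorem exists_antilipschitzWith_graphAddSMul {c : ℝ} (hc : 0 < c)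
    (hbelow : ∀ p ∈ A.graph, c * ‖p.1‖ ≤ ‖p.2 + l • p.1‖) :
    ∃ K, AntilipschitzWith K (graphAddSMul A l) := by
  refine ⟨(max c⁻¹ (1 + ‖l‖ * c⁻¹)).toNNReal,
    AddMonoidHomClass.antilipschitz_of_bound _ fun p => ?_⟩
  have hfst : ‖p.1.1‖ ≤ c⁻¹ * ‖graphAddSMul A l p‖ := by
    rw [inv_mul_eq_div, le_div_iff₀' hc]
    exact hbelow p p.2
  have hsnd : ‖p.1.2‖ ≤ (1 + ‖l‖ * c⁻¹) * ‖graphAddSMul A l p‖ := by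
    calc ‖p.1.2‖ = ‖graphAddSMul A l p - l • p.1.1‖ :=
          congrArg norm (add_sub_cancel_right _ _).symm
      _ ≤ ‖graphAddSMul A l p‖ + ‖l‖ * ‖p.1.1‖ := by
        rw [← norm_smul]; exact norm_sub_le _ _
      _ ≤ ‖graphAddSMul A l p‖ + ‖l‖ * (c⁻¹ * ‖graphAddSMul A l p‖) := by gcongr
      _ = (1 + ‖l‖ * c⁻¹) * ‖graphAddSMul A l p‖ := by ring
  rw [Real.coe_toNNReal _ (le_max_of_le_left (by positivity))]
  exact max_le (hfst.trans (by gcongr; exact le_max_left _ _))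
    (hsnd.trans (by gcongr; exact le_max_right _ _))

variable [CompleteSpace H]

theorem neg_conj_smul_mem_graph_of_mem_orthogonal_range (hA : IsSelfAdjoint A) {y : H}
    (hy : y ∈ (graphAddSMul A l).rangeᗮ) : (y, -(conj l • y)) ∈ A.graph := by
  rw [← (isSelfAdjoint_iff_graph_adjoint_eq hA.dense_domain).mp hA, Submodule.mem_adjoint_iff]
  intro a b hab
  have horth : ⟪b + l • a, y⟫_𝕜 = 0 :=
    (Submodule.mem_orthogonal _ y).mp hy _ ⟨⟨(a, b), hab⟩, rfl⟩
  rw [inner_add_left, inner_smul_left] at horth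
  rw [inner_neg_right, inner_smul_right, sub_neg_eq_add, horth]

theorem exists_isResolvent_of_mul_norm_le (hA : IsSelfAdjoint A) {c : ℝ} (hc : 0 < c)
    (hbelow : ∀ p ∈ A.graph, c * ‖p.1‖ ≤ ‖p.2 + l • p.1‖)
    (hinj : ∀ p ∈ A.graph, p.2 + conj l • p.1 = 0 → p.1 = 0) :
    ∃ R : H →L[𝕜] H, IsResolvent A l R := by
  have : CompleteSpace A.graph := hA.isClosed.completeSpace_coe
  obtain ⟨K, hK⟩ := exists_antilipschitzWith_graphAddSMul hc hbelow
  have hclosed : IsClosed ((graphAddSMul A l).range : Set H) :=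
    hK.isClosed_range (graphAddSMul A l).uniformContinuous
  have hrange : (graphAddSMul A l).range = ⊤ := by
    have : CompleteSpace (graphAddSMul A l).range := hclosed.completeSpace_coe
    refine Submodule.orthogonal_eq_bot_iff.mp ((Submodule.eq_bot_iff _).mpr fun y hy => ?_)
    exact hinj _ (neg_conj_smul_mem_graph_of_mem_orthogonal_range hA hy) (neg_add_cancel _)
  let e := ContinuousLinearEquiv.ofBijective (graphAddSMul A l)
    (LinearMap.ker_eq_bot.mpr hK.injective) hrange
  refine ⟨ContinuousLinearMap.fst 𝕜 H H ∘L A.graph.subtypeL ∘L e.symm, fun x => ?_, fun p hp => ?_⟩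
  · have hx : (e.symm x).1.2 + l • (e.symm x).1.1 = x := e.apply_symm_apply x
    have hmem := (e.symm x).2
    rwa [← Prod.mk.eta (p := (e.symm x).1), eq_sub_of_add_eq hx] at hmem
  · exact congrArg (fun q : A.graph => q.1.1) (e.symm_apply_apply ⟨p, hp⟩)

theorem exists_isResolvent (hA : IsSelfAdjoint A) (hacc : IsAccretive A)
    (hl : 0 < max (re l) |im l|) : ∃ R : H →L[𝕜] H, IsResolvent A l R := by
  refine exists_isResolvent_of_mul_norm_le hA hl
    (fun p hp => max_re_abs_im_mul_norm_fst_le hA hacc l hp) fun p hp hzero => ?_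
  have hbound := max_re_abs_im_mul_norm_fst_le hA hacc (conj l) hp
  rw [hzero, norm_zero, RCLike.conj_re, RCLike.conj_im, abs_neg] at hbound
  exact norm_le_zero_iff.mp (nonpos_of_mul_nonpos_right hbound hl)

theorem exists_isSelfAdjoint_isResolvent (hS : S.IsSymmetric) (hdense : DenseRange S)
    (hl : conj l = l) : ∃ A : H →ₗ.[𝕜] H, IsSelfAdjoint A ∧ IsResolvent A l S := by
  -- The graph of `S⁻¹ - l`.
  let g : Submodule 𝕜 (H × H) :=
    LinearMap.ker ((S : H →ₗ[𝕜] H) ∘ₗ (LinearMap.snd 𝕜 H H + l • LinearMap.fst 𝕜 H H)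
      - LinearMap.fst 𝕜 H H)
  have hg {p : H × H} : p ∈ g ↔ S (p.2 + l • p.1) = p.1 := sub_eq_zero
  have hinj := injective_of_isSymmetric_of_denseRange hS hdense
  have hgraph : g.toLinearPMap.graph = g := Submodule.toLinearPMap_graph_eq g fun p hp hp₁ => by
    have hSp := hg.mp hp
    rw [hp₁, smul_zero, add_zero] at hSp
    exact hinj (hSp.trans (map_zero S).symm)
  have hres : IsResolvent g.toLinearPMap l S := by
    refine ⟨fun x => ?_, fun p hp => ?_⟩
    · rw [hgraph, hg, sub_add_cancel]
    · rwa [hgraph, hg] at hp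
  have hdom : Dense (g.toLinearPMap.domain : Set H) := hdense.mono (by
    rintro _ ⟨x, rfl⟩
    exact (hres.exists_apply_add_smul_eq x).1)
  exact ⟨g.toLinearPMap, (hres.isSelfAdjoint_iff_isSymmetric hdom hl).mpr hS, hres⟩

end Resolvent

section StrongGraphLimit

variable {ι : Type*} {f : Filter ι} {T : ι → H →ₗ.[𝕜] H} {A : H →ₗ.[𝕜] H} {l : 𝕜}
  {R : ι → H →L[𝕜] H} {S : H →L[𝕜] H}

/-- The strong graph limit of a family of operators: the limits of convergent families of points
of the graphs. It need not be the graph of an operator. -/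
def strongGraphLimit (T : ι → H →ₗ.[𝕜] H) (f : Filter ι) : Set (H × H) :=
  {p | ∃ q : ι → H × H, (∀ i, q i ∈ (T i).graph) ∧ Tendsto q f (𝓝 p)}

theorem isAccretive_of_graph_subset_strongGraphLimit [f.NeBot] (hT : ∀ i, IsAccretive (T i))
    (hA : (A.graph : Set (H × H)) ⊆ strongGraphLimit T f) : IsAccretive A := by
  intro p hp
  obtain ⟨q, hq, hqp⟩ := hA hp
  have hform : Tendsto (fun i => re ⟪(q i).1, (q i).2⟫_𝕜) f (𝓝 (re ⟪p.1, p.2⟫_𝕜)) :=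
    (RCLike.continuous_re.tendsto _).comp (hqp.fst_nhds.inner hqp.snd_nhds)
  exact ge_of_tendsto' hform fun i => hT i _ (hq i)

theorem graph_subset_strongGraphLimit (hR : ∀ i, IsResolvent (T i) l (R i))
    (hS : IsResolvent A l S) (hlim : ∀ x, Tendsto (fun i => R i x) f (𝓝 (S x))) :
    (A.graph : Set (H × H)) ⊆ strongGraphLimit T f := by
  intro p hp
  have hx := hlim (p.2 + l • p.1)
  have hq := hx.prodMk_nhds
    ((tendsto_const_nhds (x := p.2 + l • p.1)).sub (hx.const_smul l))
  rw [hS.apply_eq p hp, add_sub_cancel_right] at hq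
  exact ⟨_, fun i => (hR i).mem_graph _, hq⟩

theorem tendsto_apply_of_mem_strongGraphLimit (hR : ∀ i, IsResolvent (T i) l (R i)) {C : ℝ}
    (hC : ∀ i, ‖R i‖ ≤ C) {p : H × H} (hp : p ∈ strongGraphLimit T f) :
    Tendsto (fun i => R i (p.2 + l • p.1)) f (𝓝 p.1) := by
  obtain ⟨q, hq, hqp⟩ := hp
  have hdata : Tendsto (fun i => (p.2 + l • p.1) - ((q i).2 + l • (q i).1)) f (𝓝 0) := by
    simpa using (tendsto_const_nhds (x := p.2 + l • p.1)).sub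
      (hqp.snd_nhds.add (hqp.fst_nhds.const_smul l))
  have herr : Tendsto (fun i => R i ((p.2 + l • p.1) - ((q i).2 + l • (q i).1))) f (𝓝 0) :=
    squeeze_zero_norm (fun i => (R i).le_of_opNorm_le (hC i) _)
      (by simpa using hdata.norm.const_mul C)
  simpa [(hR _).apply_eq _ (hq _)] using herr.add hqp.fst_nhds

theorem tendsto_apply_of_graph_subset_strongGraphLimit (hR : ∀ i, IsResolvent (T i) l (R i))
    {C : ℝ} (hC : ∀ i, ‖R i‖ ≤ C) (hS : IsResolvent A l S)
    (hA : (A.graph : Set (H × H)) ⊆ strongGraphLimit T f) (x : H) :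
    Tendsto (fun i => R i x) f (𝓝 (S x)) := by
  simpa using tendsto_apply_of_mem_strongGraphLimit hR hC (hA (hS.mem_graph x))

theorem exists_isSelfAdjoint_graph_eq_strongGraphLimit [CompleteSpace H] [f.NeBot]
    (hl : conj l = l) (hR : ∀ i, IsResolvent (T i) l (R i)) (hsymm : ∀ i, (R i).IsSymmetric)
    {C : ℝ} (hC : ∀ i, ‖R i‖ ≤ C) (hlim : ∀ x, ∃ y, Tendsto (fun i => R i x) f (𝓝 y))
    (hdense : Dense (Prod.fst '' strongGraphLimit T f)) :
    ∃ A : H →ₗ.[𝕜] H, IsSelfAdjoint A ∧ (A.graph : Set (H × H)) = strongGraphLimit T f := by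
  obtain ⟨S, hS, hRS⟩ := exists_isSymmetric_tendsto_apply hsymm hlim
  have hS_apply {p : H × H} (hp : p ∈ strongGraphLimit T f) : S (p.2 + l • p.1) = p.1 :=
    tendsto_nhds_unique (hRS _) (tendsto_apply_of_mem_strongGraphLimit hR hC hp)
  have hrange : DenseRange S := hdense.mono (by
    rintro _ ⟨p, hp, rfl⟩
    exact ⟨_, hS_apply hp⟩)
  obtain ⟨A, hA, hAS⟩ := exists_isSelfAdjoint_isResolvent hS hrange hl
  exact ⟨A, hA, (graph_subset_strongGraphLimit hR hAS hRS).antisymm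
    fun p hp => hAS.mem_graph_iff.mpr (hS_apply hp)⟩

end StrongGraphLimit

section Monotone

variable [CompleteSpace H] {ι : Type*} [SemilatticeSup ι] [Nonempty ι] {T : ι → H →ₗ.[𝕜] H}
  {D : Submodule 𝕜 H}

theorem exists_tendsto_resolvent_of_monotone (hsa : ∀ i, IsSelfAdjoint (T i))
    (hacc : ∀ i, IsAccretive (T i)) (hcore : ∀ i, (T i).HasCore D)
    (hmono : ∀ ψ (hψ : ψ ∈ D), Monotone fun i => re ⟪ψ, T i ⟨ψ, (hcore i).le_domain hψ⟩⟫_𝕜)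
    {l : 𝕜} (hl : 0 ≤ l) {R : ι → H →L[𝕜] H} (hR : ∀ i, IsResolvent (T i) l (R i)) (x : H) :
    ∃ y, Tendsto (fun i => R i x) atTop (𝓝 y) := by
  have hpos (i : ι) : (R i).IsPositive := (hR i).isPositive (hsa i) (hacc i) hl
  refine exists_tendsto_apply_of_antitone (fun i j hij => ?_) hpos x
  exact (hR i).le_of_re_inner_le_on_core (hR j) (hpos i) (hpos j).isSymmetric
    (hcore i).le_domain (hcore j) fun ψ hψ => hmono ψ hψ hij

theorem exists_isSelfAdjoint_graph_eq_strongGraphLimit_of_monotone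
    (hsa : ∀ i, IsSelfAdjoint (T i)) (hacc : ∀ i, IsAccretive (T i))
    (hcore : ∀ i, (T i).HasCore D)
    (hmono : ∀ ψ (hψ : ψ ∈ D), Monotone fun i => re ⟪ψ, T i ⟨ψ, (hcore i).le_domain hψ⟩⟫_𝕜)
    (hdense : Dense (Prod.fst '' strongGraphLimit T atTop)) :
    ∃ A : H →ₗ.[𝕜] H, IsSelfAdjoint A ∧ (A.graph : Set (H × H)) = strongGraphLimit T atTop := by
  have hone : 0 < max (re (1 : 𝕜)) |im (1 : 𝕜)| := by simp
  choose R hR using fun i => exists_isResolvent (hsa i) (hacc i) hone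
  exact exists_isSelfAdjoint_graph_eq_strongGraphLimit (map_one _) hR
    (fun i => ((hR i).isPositive (hsa i) (hacc i) zero_le_one).isSymmetric)
    (fun i => (hR i).norm_le_inv_max_re_abs_im (hsa i) (hacc i) hone)
    (exists_tendsto_resolvent_of_monotone hsa hacc hcore hmono zero_le_one hR) hdense

theorem monotone_graph_limit_general (hsa : ∀ i, IsSelfAdjoint (T i))
    (hcore : ∀ i, (T i).HasCore D)
    (hpos : ∀ i ψ (hψ : ψ ∈ D), 0 ≤ re ⟪ψ, T i ⟨ψ, (hcore i).le_domain hψ⟩⟫_𝕜)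
    (hmono : ∀ ψ (hψ : ψ ∈ D), Monotone fun i => re ⟪ψ, T i ⟨ψ, (hcore i).le_domain hψ⟩⟫_𝕜)
    (hconv : ∀ ψ (hψ : ψ ∈ D),
      ∃ L, Tendsto (fun i => T i ⟨ψ, (hcore i).le_domain hψ⟩) atTop (𝓝 L)) :
    ∃ T' : H →ₗ.[𝕜] H, IsSelfAdjoint T' ∧
      ∃ hle : D ≤ T'.domain,
        (∀ ψ (hψ : ψ ∈ D),
          Tendsto (fun i => T i ⟨ψ, (hcore i).le_domain hψ⟩) atTop (𝓝 (T' ⟨ψ, hle hψ⟩))) ∧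
        ∀ l : 𝕜, 0 < re l ∨ im l ≠ 0 → ∀ x : H,
          ∃ (u : ι → H) (v : H),
            (∀ i, ∃ h : u i ∈ (T i).domain, T i ⟨u i, h⟩ + l • u i = x) ∧
            (∃ h : v ∈ T'.domain, T' ⟨v, h⟩ + l • v = x) ∧
            Tendsto u atTop (𝓝 v) := by
  have hacc (i : ι) : IsAccretive (T i) := isAccretive_of_hasCore (hcore i) (hpos i)
  choose L hL using hconv
  have hmem ψ (hψ : ψ ∈ D) : (ψ, L ψ hψ) ∈ strongGraphLimit T atTop :=
    ⟨_, fun i => (T i).mem_graph ⟨ψ, (hcore i).le_domain hψ⟩,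
      tendsto_const_nhds.prodMk_nhds (hL ψ hψ)⟩
  have hdense : Dense (Prod.fst '' strongGraphLimit T atTop) :=
    (dense_of_hasCore (hsa (Classical.arbitrary ι)).dense_domain (hcore _)).mono
      fun ψ hψ => ⟨_, hmem ψ hψ, rfl⟩
  obtain ⟨T', hT', hgraph⟩ :=
    exists_isSelfAdjoint_graph_eq_strongGraphLimit_of_monotone hsa hacc hcore hmono hdense
  have hext ψ (hψ : ψ ∈ D) : (ψ, L ψ hψ) ∈ T'.graph := hgraph.ge (hmem ψ hψ)
  refine ⟨T', hT', fun ψ hψ => LinearPMap.mem_domain_of_mem_graph (hext ψ hψ),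
    fun ψ hψ => ?_, fun l hl x => ?_⟩
  · rw [← (LinearPMap.image_iff _).mpr (hext ψ hψ)]
    exact hL ψ hψ
  · have hl' : 0 < max (re l) |im l| := lt_max_iff.mpr (hl.imp_right abs_pos.mpr)
    choose R hR using fun i => exists_isResolvent (hsa i) (hacc i) hl'
    obtain ⟨S, hS⟩ := exists_isResolvent hT'
      (isAccretive_of_graph_subset_strongGraphLimit hacc hgraph.le) hl'
    have hC i := (hR i).norm_le_inv_max_re_abs_im (hsa i) (hacc i) hl'
    exact ⟨fun i => R i x, S x, fun i => (hR i).exists_apply_add_smul_eq x,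
      hS.exists_apply_add_smul_eq x,
      tendsto_apply_of_graph_subset_strongGraphLimit hR hC hS hgraph.le x⟩

end Monotone

end

/-- **Monotone Graph Limit Theorem** (Theorem 3.7 of the paper).  Let `(Tₙ)` be self-adjoint
operators with a common core `D`, `0 ≤ Tₙ ≤ Tₙ₊₁` on `D`, and suppose `Tₙψ` converges for every
`ψ ∈ D`.  Then there is a self-adjoint operator `T'` extending the strong limit `T` on `D`, such
that `Tₙ → T'` in the strong resolvent sense: for every non-real `λ` and every `x ∈ H`, the
solutions `uₙ` of `(Tₙ + λ)uₙ = x` converge to the solution `v` of `(T' + λ)v = x`. -/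
theorem monotone_graph_limit
    {H : Type*} [NormedAddCommGroup H] [InnerProductSpace ℂ H] [CompleteSpace H]
    (T : ℕ → H →ₗ.[ℂ] H) (hsa : ∀ n, IsSelfAdjoint (T n))
    (D : Submodule ℂ H) (hD : ∀ n, D ≤ (T n).domain)
    (hcore : ∀ n, ((T n).domRestrict D).closure = T n)
    (hpos : ∀ n (ψ : H) (hψ : ψ ∈ D), 0 ≤ ⟪ψ, T n ⟨ψ, hD n hψ⟩⟫_ℂ)
    (hmono : ∀ n (ψ : H) (hψ : ψ ∈ D),
      ⟪ψ, T n ⟨ψ, hD n hψ⟩⟫_ℂ ≤ ⟪ψ, T (n + 1) ⟨ψ, hD (n + 1) hψ⟩⟫_ℂ)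
    (hconv : ∀ (ψ : H) (hψ : ψ ∈ D),
      ∃ L : H, Tendsto (fun n => T n ⟨ψ, hD n hψ⟩) atTop (nhds L)) :
    ∃ T' : H →ₗ.[ℂ] H, IsSelfAdjoint T' ∧
      ∃ hle : D ≤ T'.domain,
        (∀ (ψ : H) (hψ : ψ ∈ D),
          Tendsto (fun n => T n ⟨ψ, hD n hψ⟩) atTop (nhds (T' ⟨ψ, hle hψ⟩))) ∧
        (∀ (l : ℂ), l.im ≠ 0 → ∀ x : H,
          ∃ (u : ℕ → H) (v : H),
            (∀ n, ∃ h : u n ∈ (T n).domain, T n ⟨u n, h⟩ + l • u n = x) ∧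
            (∃ h : v ∈ T'.domain, T' ⟨v, h⟩ + l • v = x) ∧
            Tendsto u atTop (nhds v)) := by
  obtain ⟨T', hT', hle, hext, hres⟩ := monotone_graph_limit_general hsa
    (fun n => ⟨hD n, hcore n⟩) (fun n ψ hψ => (Complex.le_def.mp (hpos n ψ hψ)).1)
    (fun ψ hψ => monotone_nat_of_le_succ fun n => (Complex.le_def.mp (hmono n ψ hψ)).1) hconv
  exact ⟨T', hT', hle, hext, fun l hl => hres l (.inr hl)⟩
end

section
/- Let (H_n)_{n∈ℕ} be complex Hilbert spaces, H their Hilbert direct sum, L^(n) ⊆ H the closed subspace of sequences ψ with ψ_m = 0 for all m > n, and ℱ ⊆ H the algebraic direct sum (sequences with only finitely many nonzero entries). Let O : ℱ → ℱ be a linear operator and c > 0 a constant such that for every n: O(ℱ ∩ L^(n)) ⊆ L^(n+2) and ‖Oψ‖ ≤ c(n+2)‖ψ‖ for all ψ ∈ ℱ ∩ L^(n). Then every vector of ℱ is an analytic vector for O; and if in addition O is symmetric, then O with domain ℱ is essentially self-adjoint. -/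
open scoped InnerProductSpace

/-- A densely defined symmetric operator is *essentially self-adjoint* iff the ranges of
`T + iI` and `T - iI` are both dense. -/
def EssSelfAdjoint {H : Type*} [NormedAddCommGroup H] [InnerProductSpace ℂ H]
    (D : Submodule ℂ H) (T : D →ₗ[ℂ] H) : Prop :=
  Dense (Set.range fun x : D => T x + Complex.I • (x : H)) ∧
    Dense (Set.range fun x : D => T x - Complex.I • (x : H))

/-!
Let `T` raise a filtration `V` by one step, with norm at most `c (n + 1)` on `V n`. For `v ∈ V N`,
multiplying these bounds along the orbit of `v` gives `‖Tⁿ v‖ ≤ (c (N + 1))ⁿ n! ‖v‖`.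

For essential self-adjointness of a symmetric `T`, let `φ` be orthogonal to the range of `T + z`,
`z ∉ ℝ`, and let `φₙ` be its projection onto `V n`. Symmetry gives
`|Im z| ‖φₙ₊₁‖² = |Im ⟪T φₙ₊₁, φ - φₙ₊₁⟫|`, and since `T` raises the filtration by one, this equals
`|Im ⟪T (φₙ₊₁ - φₙ), φₙ₊₂ - φₙ₊₁⟫| ≤ c (n + 2) ‖φₙ₊₁ - φₙ‖ ‖φₙ₊₂ - φₙ₊₁‖`. The squared increments
are summable and the harmonic series is not, so `φₙ = 0` for all `n`.

An operator raising the grading by two raises the filtration `n ↦ L⁽²ⁿ⁾` by one.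
-/

open Filter
open scoped NNReal

theorem nonpos_of_summable_of_le_natCast_mul {u : ℕ → ℝ} (hu : Summable u) {ε : ℝ} {a : ℕ}
    (h : ∀ᶠ n : ℕ in atTop, ε ≤ (n + a : ℕ) * u n) : ε ≤ 0 := by
  by_contra! hε
  have hle : ∀ᶠ n : ℕ in atTop, ‖ε * (1 / (n + a : ℕ) : ℝ)‖ ≤ u n := by
    filter_upwards [h, eventually_gt_atTop 0] with n hn hpos
    have : (0 : ℝ) < (n + a : ℕ) := by exact_mod_cast Nat.add_pos_left hpos a
    rw [Real.norm_of_nonneg (by positivity), mul_one_div, div_le_iff₀' this]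
    exact hn
  have hharmonic := (summable_mul_left_iff hε.ne').1 (hu.of_norm_bounded_eventually_nat hle)
  exact Real.not_summable_one_div_natCast
    ((summable_nat_add_iff (f := fun n : ℕ => (1 / n : ℝ)) a).1 hharmonic)

section Projections

variable {𝕜 E : Type*} [RCLike 𝕜] [NormedAddCommGroup E] [InnerProductSpace 𝕜 E]

theorem norm_starProjection_sub_sq_of_le {U W : Submodule 𝕜 E} [U.HasOrthogonalProjection]
    [W.HasOrthogonalProjection] (h : U ≤ W) (x : E) :
    ‖W.starProjection x - U.starProjection x‖ ^ 2 =
      ‖W.starProjection x‖ ^ 2 - ‖U.starProjection x‖ ^ 2 := by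
  have hcomp : U.starProjection (W.starProjection x) = U.starProjection x :=
    congrArg (· x) (Submodule.starProjection_comp_starProjection_of_le h)
  have hpyth := Submodule.norm_sq_eq_add_norm_sq_starProjection (W.starProjection x) U
  rw [Submodule.starProjection_orthogonal_val, hcomp] at hpyth
  exact eq_sub_of_add_eq' hpyth.symm

theorem inner_starProjection_self_left (U : Submodule 𝕜 E) [U.HasOrthogonalProjection] (x : E) :
    inner 𝕜 (U.starProjection x) x = (‖U.starProjection x‖ : 𝕜) ^ 2 := by
  have h := Submodule.inner_right_of_mem_orthogonal (𝕜 := 𝕜) (U.starProjection_apply_mem x)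
    (U.sub_starProjection_mem_orthogonal x)
  rwa [inner_sub_right, inner_self_eq_norm_sq_to_K, sub_eq_zero] at h

theorem norm_starProjection_le_of_le {U W : Submodule 𝕜 E} [U.HasOrthogonalProjection]
    [W.HasOrthogonalProjection] (h : U ≤ W) (x : E) :
    ‖U.starProjection x‖ ≤ ‖W.starProjection x‖ := by
  refine le_of_sq_le_sq ?_ (norm_nonneg _)
  rw [← sub_nonneg, ← norm_starProjection_sub_sq_of_le h]
  positivity

theorem summable_norm_starProjection_succ_sub_sq {V : ℕ → Submodule 𝕜 E}
    [∀ n, (V n).HasOrthogonalProjection] (hV : Monotone V) (x : E) :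
    Summable fun n => ‖(V (n + 1)).starProjection x - (V n).starProjection x‖ ^ 2 := by
  refine summable_of_sum_range_le (c := ‖x‖ ^ 2) (fun n => by positivity) fun n => ?_
  calc ∑ k ∈ Finset.range n, ‖(V (k + 1)).starProjection x - (V k).starProjection x‖ ^ 2
      = ‖(V n).starProjection x‖ ^ 2 - ‖(V 0).starProjection x‖ ^ 2 := by
        simp only [norm_starProjection_sub_sq_of_le (hV (Nat.le_succ _))]
        exact Finset.sum_range_sub (fun k => ‖(V k).starProjection x‖ ^ 2) n
    _ ≤ ‖(V n).starProjection x‖ ^ 2 := sub_le_self _ (by positivity)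
    _ ≤ ‖x‖ ^ 2 := by gcongr; exact (V n).norm_starProjection_apply_le x

/-- The projection of `x` onto `V n`, as a vector of the domain `⨆ n, V n` of an operator. -/
noncomputable def filtrationTruncation (V : ℕ → Submodule 𝕜 E)
    [∀ n, (V n).HasOrthogonalProjection] (x : E) (n : ℕ) : ↥(⨆ n, V n) :=
  ⟨(V n).starProjection x, le_iSup V n ((V n).starProjection_apply_mem x)⟩

end Projections

theorem im_inner_apply_sub_starProjection {H : Type*} [NormedAddCommGroup H]
    [InnerProductSpace ℂ H] {D : Submodule ℂ H} {T : Module.End ℂ D}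
    (hsymm : T.IsSymmetric) {z : ℂ} {φ : H} (hφ : ∀ x : D, ⟪(T x : H) + z • (x : H), φ⟫_ℂ = 0)
    {U : Submodule ℂ H} [U.HasOrthogonalProjection] {q : D} (hq : (q : H) = U.starProjection φ) :
    (⟪(T q : H), φ - U.starProjection φ⟫_ℂ).im = z.im * ‖U.starProjection φ‖ ^ 2 := by
  have hTq : ⟪(T q : H), φ⟫_ℂ = -(starRingEnd ℂ z * ((‖U.starProjection φ‖ ^ 2 : ℝ) : ℂ)) := by
    have h := hφ q
    rw [inner_add_left, inner_smul_left, hq, inner_starProjection_self_left] at h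
    rw [eq_neg_of_add_eq_zero_left h]
    push_cast
    rfl
  have hreal : (⟪(T q : H), (q : H)⟫_ℂ).im = 0 := hsymm.im_inner_apply_self q
  rw [inner_sub_right, ← hq, Complex.sub_im, hreal, hTq, Complex.neg_im, Complex.im_mul_ofReal,
    Complex.conj_im, hq]
  ring

/-- `v` is an analytic vector of the everywhere defined operator `T` on `D`: `‖Tⁿ v‖` grows at most
like `n !` up to a geometric factor. An unbounded operator with invariant domain is encoded as an
endomorphism of its domain. -/
def IsAnalyticVector {R D : Type*} [Semiring R] [SeminormedAddCommGroup D] [Module R D]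
    (T : Module.End R D) (v : D) : Prop :=
  ∃ C : ℝ, 0 < C ∧ ∀ n : ℕ, ‖(T ^ n) v‖ ≤ C ^ (n + 1) * (n.factorial : ℝ)

/-- `T`, defined on the union of the filtration `V`, maps `V n` into `V (n + 1)`, with norm at most
`c * (n + 1)` there. -/
structure HasLinearGrowth {R E : Type*} [Ring R] [SeminormedAddCommGroup E] [Module R E]
    (V : ℕ → Submodule R E) (T : Module.End R ↥(⨆ n, V n)) (c : ℝ≥0) : Prop where
  map_mem : ∀ (n : ℕ) (x : ↥(⨆ n, V n)), (x : E) ∈ V n → (T x : E) ∈ V (n + 1)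
  norm_le : ∀ (n : ℕ) (x : ↥(⨆ n, V n)), (x : E) ∈ V n → ‖T x‖ ≤ c * (n + 1) * ‖x‖

namespace HasLinearGrowth

section AnalyticVectors

variable {R E : Type*} [Ring R] [SeminormedAddCommGroup E] [Module R E] {V : ℕ → Submodule R E}
  {T : Module.End R ↥(⨆ n, V n)} {c : ℝ≥0}

theorem pow_apply_mem (hT : HasLinearGrowth V T c) {v : ↥(⨆ n, V n)} {N : ℕ}
    (hv : (v : E) ∈ V N) (n : ℕ) : ((T ^ n) v : E) ∈ V (N + n) := by
  induction n with
  | zero => exact hv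
  | succ n ih =>
    rw [pow_succ', Module.End.mul_apply]
    exact hT.map_mem _ _ ih

theorem norm_pow_apply_le (hT : HasLinearGrowth V T c) {v : ↥(⨆ n, V n)} {N : ℕ}
    (hv : (v : E) ∈ V N) (n : ℕ) : ‖(T ^ n) v‖ ≤ (c * (N + 1)) ^ n * (n.factorial : ℝ) * ‖v‖ := by
  induction n with
  | zero => simp
  | succ n ih =>
    have hfactor : ((N + n : ℕ) + 1 : ℝ) ≤ (N + 1) * (n + 1) := by
      push_cast
      nlinarith [mul_nonneg (Nat.cast_nonneg (α := ℝ) N) (Nat.cast_nonneg (α := ℝ) n)]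
    calc ‖(T ^ (n + 1)) v‖ = ‖T ((T ^ n) v)‖ := by rw [pow_succ', Module.End.mul_apply]
      _ ≤ c * ((N + n : ℕ) + 1) * ‖(T ^ n) v‖ := hT.norm_le _ _ (hT.pow_apply_mem hv n)
      _ ≤ c * ((N + 1) * (n + 1)) * ((c * (N + 1)) ^ n * (n.factorial : ℝ) * ‖v‖) := by gcongr
      _ = (c * (N + 1)) ^ (n + 1) * ((n + 1).factorial : ℝ) * ‖v‖ := by
        rw [Nat.factorial_succ]
        push_cast
        ring

theorem isAnalyticVector (hT : HasLinearGrowth V T c) (hV : Monotone V) (v : ↥(⨆ n, V n)) :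
    IsAnalyticVector T v := by
  obtain ⟨N, hv⟩ := (Submodule.mem_iSup_of_directed V hV.directed_le).1 v.2
  refine ⟨c * (N + 1) + ‖v‖ + 1, by positivity, fun n => ?_⟩
  calc ‖(T ^ n) v‖ ≤ (c * (N + 1)) ^ n * (n.factorial : ℝ) * ‖v‖ := hT.norm_pow_apply_le hv n
    _ = (c * (N + 1)) ^ n * ‖v‖ * (n.factorial : ℝ) := mul_right_comm _ _ _
    _ ≤ (c * (N + 1) + ‖v‖ + 1) ^ n * (c * (N + 1) + ‖v‖ + 1) * (n.factorial : ℝ) := by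
      gcongr
      · linarith [norm_nonneg v]
      · linarith [show 0 ≤ (c : ℝ) * (N + 1) by positivity]
    _ = (c * (N + 1) + ‖v‖ + 1) ^ (n + 1) * (n.factorial : ℝ) := by rw [pow_succ]

end AnalyticVectors

section EssentialSelfAdjointness

variable {H : Type*} [NormedAddCommGroup H] [InnerProductSpace ℂ H] {V : ℕ → Submodule ℂ H}
  [∀ n, (V n).HasOrthogonalProjection] {T : Module.End ℂ ↥(⨆ n, V n)} {c : ℝ≥0} {z : ℂ} {φ : H}

theorem inner_apply_filtrationTruncation_sub (hT : HasLinearGrowth V T c) (hV : Monotone V)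
    (φ : H) (n : ℕ) :
    ⟪(T (filtrationTruncation V φ (n + 1)) : H), φ - (V (n + 1)).starProjection φ⟫_ℂ =
      ⟪(T (filtrationTruncation V φ (n + 1) - filtrationTruncation V φ n) : H),
        (V (n + 2)).starProjection φ - (V (n + 1)).starProjection φ⟫_ℂ := by
  set p := filtrationTruncation V φ
  have hTp (k : ℕ) : (T (p k) : H) ∈ V (k + 1) :=
    hT.map_mem k _ ((V k).starProjection_apply_mem φ)
  have hlow : ⟪(T (p n) : H), φ - (V (n + 1)).starProjection φ⟫_ℂ = 0 :=
    Submodule.inner_right_of_mem_orthogonal (hTp n) (Submodule.sub_starProjection_mem_orthogonal φ)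
  have hhigh : ⟪(T (p (n + 1) - p n) : H), φ - (V (n + 2)).starProjection φ⟫_ℂ = 0 := by
    rw [map_sub]
    exact Submodule.inner_right_of_mem_orthogonal
      (sub_mem (hTp (n + 1)) (hV (Nat.le_succ _) (hTp n)))
      (Submodule.sub_starProjection_mem_orthogonal φ)
  calc ⟪(T (p (n + 1)) : H), φ - (V (n + 1)).starProjection φ⟫_ℂ
      = ⟪(T (p (n + 1) - p n) : H), φ - (V (n + 1)).starProjection φ⟫_ℂ := by
        rw [map_sub, Submodule.coe_sub, inner_sub_left, hlow, sub_zero]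
    _ = ⟪(T (p (n + 1) - p n) : H),
          (V (n + 2)).starProjection φ - (V (n + 1)).starProjection φ⟫_ℂ := by
        rw [← sub_add_sub_cancel φ ((V (n + 2)).starProjection φ), inner_add_right, hhigh, zero_add]

theorem abs_im_mul_norm_starProjection_sq_le (hT : HasLinearGrowth V T c) (hV : Monotone V)
    (hsymm : T.IsSymmetric) (hφ : ∀ x : ↥(⨆ n, V n), ⟪(T x : H) + z • (x : H), φ⟫_ℂ = 0) (n : ℕ) :
    |z.im| * ‖(V (n + 1)).starProjection φ‖ ^ 2 ≤
      c * (n + 2) * (‖(V (n + 1)).starProjection φ - (V n).starProjection φ‖ *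
        ‖(V (n + 2)).starProjection φ - (V (n + 1)).starProjection φ‖) := by
  set p := filtrationTruncation V φ
  set d := p (n + 1) - p n
  set e := (V (n + 2)).starProjection φ - (V (n + 1)).starProjection φ
  have hd : (d : H) ∈ V (n + 1) :=
    sub_mem ((V (n + 1)).starProjection_apply_mem φ)
      (hV (Nat.le_succ n) ((V n).starProjection_apply_mem φ))
  have him : (⟪(T d : H), e⟫_ℂ).im = z.im * ‖(V (n + 1)).starProjection φ‖ ^ 2 := by
    rw [← hT.inner_apply_filtrationTruncation_sub hV]
    exact im_inner_apply_sub_starProjection hsymm hφ rfl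
  calc |z.im| * ‖(V (n + 1)).starProjection φ‖ ^ 2
      = |(⟪(T d : H), e⟫_ℂ).im| := by rw [him, abs_mul, abs_sq]
    _ ≤ ‖⟪(T d : H), e⟫_ℂ‖ := Complex.abs_im_le_norm _
    _ ≤ ‖T d‖ * ‖e‖ := norm_inner_le_norm _ _
    _ ≤ c * ((n + 1 : ℕ) + 1) * ‖d‖ * ‖e‖ := by gcongr; exact hT.norm_le _ _ hd
    _ = c * (n + 2) * (‖d‖ * ‖e‖) := by push_cast; ring

theorem starProjection_eq_zero_of_forall_inner_eq_zero (hT : HasLinearGrowth V T c)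
    (hV : Monotone V) (hsymm : T.IsSymmetric) (hz : z.im ≠ 0)
    (hφ : ∀ x : ↥(⨆ n, V n), ⟪(T x : H) + z • (x : H), φ⟫_ℂ = 0) (N : ℕ) :
    (V N).starProjection φ = 0 := by
  set δ : ℕ → ℝ := fun n => ‖(V (n + 1)).starProjection φ - (V n).starProjection φ‖
  have hδ : Summable fun n => δ n ^ 2 := summable_norm_starProjection_succ_sub_sq hV φ
  have hsum : Summable fun n => c * (δ n ^ 2 + δ (n + 1) ^ 2) :=
    (hδ.add ((summable_nat_add_iff 1).2 hδ)).mul_left _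
  have hbound : ∀ᶠ n : ℕ in atTop, |z.im| * ‖(V N).starProjection φ‖ ^ 2 ≤
      (n + 2 : ℕ) * (c * (δ n ^ 2 + δ (n + 1) ^ 2)) := by
    filter_upwards [eventually_ge_atTop N] with n hn
    calc |z.im| * ‖(V N).starProjection φ‖ ^ 2
        ≤ |z.im| * ‖(V (n + 1)).starProjection φ‖ ^ 2 := by
          gcongr
          exact norm_starProjection_le_of_le (hV (by omega)) φ
      _ ≤ c * (n + 2) * (δ n * δ (n + 1)) := hT.abs_im_mul_norm_starProjection_sq_le hV hsymm hφ n
      _ ≤ c * (n + 2) * (δ n ^ 2 + δ (n + 1) ^ 2) := by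
          gcongr
          nlinarith [two_mul_le_add_sq (δ n) (δ (n + 1)), sq_nonneg (δ n), sq_nonneg (δ (n + 1))]
      _ = (n + 2 : ℕ) * (c * (δ n ^ 2 + δ (n + 1) ^ 2)) := by push_cast; ring
  have hnonpos := nonpos_of_summable_of_le_natCast_mul hsum hbound
  have hnorm : ‖(V N).starProjection φ‖ ^ 2 ≤ 0 :=
    nonpos_of_mul_nonpos_right hnonpos (by positivity)
  simpa using hnorm

variable [CompleteSpace H]

theorem dense_range_add_smul (hT : HasLinearGrowth V T c) (hV : Monotone V)
    (hdense : Dense ((⨆ n, V n : Submodule ℂ H) : Set H)) (hsymm : T.IsSymmetric)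
    (hz : z.im ≠ 0) : Dense (Set.range fun x : ↥(⨆ n, V n) => (T x : H) + z • (x : H)) := by
  set S : ↥(⨆ n, V n) →ₗ[ℂ] H := Submodule.subtype _ ∘ₗ T + z • Submodule.subtype _
  change Dense (LinearMap.range S : Set H)
  rw [Submodule.dense_iff_topologicalClosure_eq_top, Submodule.topologicalClosure_eq_top_iff,
    Submodule.eq_bot_iff]
  intro φ hφ
  have hproj := hT.starProjection_eq_zero_of_forall_inner_eq_zero hV hsymm hz
    fun x => (Submodule.mem_orthogonal _ φ).1 hφ _ (LinearMap.mem_range_self S x)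
  refine hdense.eq_zero_of_mem_orthogonal ?_
  rw [← Submodule.iInf_orthogonal, Submodule.mem_iInf]
  exact fun n => (V n).starProjection_apply_eq_zero_iff.1 (hproj n)

theorem essSelfAdjoint (hT : HasLinearGrowth V T c) (hV : Monotone V)
    (hdense : Dense ((⨆ n, V n : Submodule ℂ H) : Set H)) (hsymm : T.IsSymmetric) :
    EssSelfAdjoint (⨆ n, V n) (Submodule.subtype _ ∘ₗ T) := by
  refine ⟨hT.dense_range_add_smul hV hdense hsymm (by simp), ?_⟩
  simpa only [neg_smul, ← sub_eq_add_neg, LinearMap.comp_apply, Submodule.subtype_apply] using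
    hT.dense_range_add_smul hV hdense hsymm (z := -Complex.I) (by simp)

end EssentialSelfAdjointness

end HasLinearGrowth

theorem graded_operator_analytic_vectors_and_esa_general {H : Type*} [NormedAddCommGroup H]
    [InnerProductSpace ℂ H] [CompleteSpace H] (V : ℕ → Submodule ℂ H)
    [∀ n, (V n).HasOrthogonalProjection] (hV : Monotone V)
    (hdense : Dense ((⨆ n, V n : Submodule ℂ H) : Set H)) {T : Module.End ℂ ↥(⨆ n, V n)} {c : ℝ≥0}
    (hT : HasLinearGrowth V T c) :
    (∀ v, IsAnalyticVector T v) ∧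
      (T.IsSymmetric → EssSelfAdjoint (⨆ n, V n) (Submodule.subtype _ ∘ₗ T)) :=
  ⟨hT.isAnalyticVector hV, hT.essSelfAdjoint hV hdense⟩

section DirectSum

variable {𝕜 : Type*} {G : ℕ → Type*} [NormedField 𝕜] [∀ n, NormedAddCommGroup (G n)]
  [∀ n, NormedSpace 𝕜 (G n)] {p : ENNReal}

variable (𝕜 G p) in
/-- The subspace `L⁽²ⁿ⁾` of sequences that vanish beyond index `2 * n`. -/
def lpEvenFiltration (n : ℕ) : Submodule 𝕜 (lp G p) where
  carrier := {ψ | ∀ m > 2 * n, ψ m = 0}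
  zero_mem' _ _ := rfl
  add_mem' hx hy m hm := by simp [hx m hm, hy m hm]
  smul_mem' a x hx m hm := by simp [hx m hm]

theorem monotone_lpEvenFiltration : Monotone (lpEvenFiltration 𝕜 G p) :=
  fun _ _ hnk _ hψ m hm => hψ m (by omega)

theorem mem_iSup_lpEvenFiltration {ψ : lp G p} :
    ψ ∈ ⨆ n, lpEvenFiltration 𝕜 G p n ↔ {n : ℕ | ψ n ≠ 0}.Finite := by
  rw [Submodule.mem_iSup_of_directed _ monotone_lpEvenFiltration.directed_le]
  constructor
  · rintro ⟨n, hψ⟩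
    exact (Set.finite_Iic (2 * n)).subset fun m hm => not_lt.1 fun hlt => hm (hψ m hlt)
  · intro hfin
    obtain ⟨N, hN⟩ := hfin.bddAbove
    exact ⟨N, fun m hm => by_contra fun hne => absurd (hN hne) (by omega)⟩

theorem dense_iSup_lpEvenFiltration [Fact (1 ≤ p)] (hp : p ≠ ⊤) :
    Dense ((⨆ n, lpEvenFiltration 𝕜 G p n : Submodule 𝕜 (lp G p)) : Set (lp G p)) := by
  intro ψ
  refine mem_closure_of_tendsto (lp.hasSum_single hp ψ) (Eventually.of_forall fun s => ?_)
  refine sum_mem fun k _ => mem_iSup_lpEvenFiltration.2 ((Set.finite_singleton k).subset ?_)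
  exact fun m hm => by_contra fun hne => hm (lp.single_apply_ne p k _ hne)

theorem isClosed_lpEvenFiltration [Fact (1 ≤ p)] (n : ℕ) :
    IsClosed (lpEvenFiltration 𝕜 G p n : Set (lp G p)) := by
  change IsClosed {ψ : lp G p | ∀ m > 2 * n, ψ m = 0}
  simp only [Set.ofPred_forall]
  exact isClosed_iInter fun m => isClosed_iInter fun _ =>
    isClosed_singleton.preimage
      ((continuous_apply m).comp lp.uniformContinuous_coe.continuous)

theorem hasLinearGrowth_lpEvenFiltration [Fact (1 ≤ p)]
    {O : Module.End 𝕜 ↥(⨆ n, lpEvenFiltration 𝕜 G p n)} {c : ℝ} (hc : 0 ≤ c)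
    (hgrade : ∀ (n : ℕ) (ψ : ↥(⨆ n, lpEvenFiltration 𝕜 G p n)), (∀ m > n, (ψ : lp G p) m = 0) →
      ∀ m > n + 2, (O ψ : lp G p) m = 0)
    (hnorm : ∀ (n : ℕ) (ψ : ↥(⨆ n, lpEvenFiltration 𝕜 G p n)), (∀ m > n, (ψ : lp G p) m = 0) →
      ‖(O ψ : lp G p)‖ ≤ c * (n + 2) * ‖(ψ : lp G p)‖) :
    HasLinearGrowth (lpEvenFiltration 𝕜 G p) O (2 * c.toNNReal) where
  map_mem n := hgrade (2 * n)
  norm_le n ψ hψ := by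
    calc ‖O ψ‖ ≤ c * ((2 * n : ℕ) + 2) * ‖ψ‖ := hnorm (2 * n) ψ hψ
      _ = (2 * c.toNNReal : ℝ≥0) * (n + 1) * ‖ψ‖ := by
        push_cast
        rw [Real.coe_toNNReal c hc]
        ring

end DirectSum

instance hasOrthogonalProjection_lpEvenFiltration {𝕜 : Type*} {G : ℕ → Type*} [RCLike 𝕜]
    [∀ n, NormedAddCommGroup (G n)] [∀ n, InnerProductSpace 𝕜 (G n)] [∀ n, CompleteSpace (G n)]
    (n : ℕ) : (lpEvenFiltration 𝕜 G 2 n).HasOrthogonalProjection :=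
  have := (isClosed_lpEvenFiltration (𝕜 := 𝕜) (G := G) (p := 2) n).completeSpace_coe
  .ofCompleteSpace _

/-- **Abstract form of Proposition 3.3 of the paper.**  Let `H = ⊕ₙ Hₙ` be a Hilbert direct sum,
`ℱ` the algebraic direct sum, and `O : ℱ → ℱ` a linear operator raising the grading by at most `2`
with `‖Oψ‖ ≤ c(n+2)‖ψ‖` on `ℱ ∩ L⁽ⁿ⁾` (where `L⁽ⁿ⁾` consists of the `ψ` with `ψₘ = 0` for
`m > n`).  Then every vector of `ℱ` is an analytic vector for `O`, and if `O` is symmetric then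
it is essentially self-adjoint on `ℱ`. -/
theorem graded_operator_analytic_vectors_and_esa
    {G : ℕ → Type*} [∀ n, NormedAddCommGroup (G n)] [∀ n, InnerProductSpace ℂ (G n)]
    [∀ n, CompleteSpace (G n)]
    (F : Submodule ℂ (lp G 2))
    (hF : ∀ ψ : lp G 2, ψ ∈ F ↔ {n : ℕ | ψ n ≠ 0}.Finite)
    (O : F →ₗ[ℂ] F) (c : ℝ) (hc : 0 < c)
    (hgrade : ∀ (n : ℕ) (ψ : F), (∀ m > n, (ψ : lp G 2) m = 0) →
      ∀ m > n + 2, ((O ψ : F) : lp G 2) m = 0)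
    (hnorm : ∀ (n : ℕ) (ψ : F), (∀ m > n, (ψ : lp G 2) m = 0) →
      ‖((O ψ : F) : lp G 2)‖ ≤ c * (n + 2) * ‖(ψ : lp G 2)‖) :
    (∀ v : F, ∃ c' : ℝ, 0 < c' ∧ ∀ n : ℕ,
      ‖(((O ^ n) v : F) : lp G 2)‖ ≤ c' ^ (n + 1) * (Nat.factorial n : ℝ)) ∧
    ((∀ x y : F, ⟪((O x : F) : lp G 2), (y : lp G 2)⟫_ℂ = ⟪(x : lp G 2), ((O y : F) : lp G 2)⟫_ℂ) →
      EssSelfAdjoint F (F.subtype ∘ₗ O)) := by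
  obtain rfl : F = ⨆ n, lpEvenFiltration ℂ G 2 n := by ext; rw [hF, mem_iSup_lpEvenFiltration]
  exact graded_operator_analytic_vectors_and_esa_general (lpEvenFiltration ℂ G 2)
    monotone_lpEvenFiltration (dense_iSup_lpEvenFiltration ENNReal.ofNat_ne_top)
    (hasLinearGrowth_lpEvenFiltration hc.le hgrade hnorm)
end
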